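/- Let X and Y be disjoint finite sets of propositional variables, let k ∈ ℕ, and let ψ be a 2CNF formula each of whose clauses either consists of two negative literals on two distinct variables of X, or consists of one negative literal on a variable of X together with one literal (positive or negative) on a variable of Y. Let G be the graph with vertex set V = {v_y, v_{¬y} : y ∈ Y} ∪ {v_x : x ∈ X}, let V′ = {v_y, v_{¬y} : y ∈ Y}, and let the edges of G be: all pairs of distinct vertices of V′ except the pairs {v_y, v_{¬y}} for y ∈ Y; the pairs {v_x, v_{x′}} for distinct x, x′ ∈ X such that (¬x ∨ ¬x′) is not a clause of ψ; the pairs {v_x, v_y} for x ∈ X, y ∈ Y such that (¬x ∨ ¬y) is not a clause of ψ; and the pairs {v_x, v_{¬y}} for x ∈ X, y ∈ Y such that (¬x ∨ y) is not a clause of ψ. Then the following are equivalent: (1) for every truth assignment α : Y → Bool there exists a truth assignment β : X → Bool of weight k such that α ∪ β satisfies ψ; (2) for every clique C ⊆ V′ of G there exists a set D of k vertices of G, disjoint from C, such that C ∪ D is a clique of G (of size |C| + k). -/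

import Mathlib

/-- The weight of a truth assignment: the number of variables it maps to true. -/
def weight {X : Type} [Fintype X] (α : X → Bool) : ℕ :=
  (Finset.univ.filter fun x => α x = true).card

/-- The adjacency relation of the graph `G` constructed from the 2CNF formula `ψ`:
the vertex `Sum.inl (y, true)` is `v_y`, the vertex `Sum.inl (y, false)` is `v_{¬y}`,
and the vertex `Sum.inr x` is `v_x`.  Here `cXX x x'` says that `(¬x ∨ ¬x')` is a
clause of `ψ`, and `cXY x y s` says that the clause `(¬x ∨ y)` (if `s = true`) resp.
`(¬x ∨ ¬y)` (if `s = false`) belongs to `ψ`. -/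
def adj6 {X Y : Type} (cXX : X → X → Prop) (cXY : X → Y → Bool → Prop) :
    (Y × Bool) ⊕ X → (Y × Bool) ⊕ X → Prop
  | Sum.inl (y, _), Sum.inl (y', _) => y ≠ y'
  | Sum.inl (y, b), Sum.inr a => ¬ cXY a y (!b)
  | Sum.inr a, Sum.inl (y, b) => ¬ cXY a y (!b)
  | Sum.inr a, Sum.inr a' => a ≠ a' ∧ ¬ cXX a a'

/-!
A clique inside `V'` never contains both `v_y` and `v_{¬y}`, so it is a partial assignment to `Y`,
and the maximal ones are exactly the total assignments. A set of vertices `v_x` extends the clique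
of a total assignment `α` to a larger clique precisely when making those variables true, together
with `α`, violates no clause. For a partial assignment one extends a total assignment containing
it; conversely the vertices added to a total assignment must all come from `X`, by maximality.
-/

theorem toRight_eq_empty_iff {α β : Type*} {C : Finset (α ⊕ β)} :
    C.toRight = ∅ ↔ ∀ p ∈ C, p.isLeft = true := by
  simp [Finset.eq_empty_iff_forall_notMem]

section Literals

variable {X Y : Type*} [Fintype X] [Fintype Y]

/-- The set of variables made true by an assignment: the choice of `X`-vertices it describes. -/
def trueVars (β : X → Bool) : Finset X :=
  Finset.univ.filter fun x => β x = true

@[simp]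
theorem mem_trueVars {β : X → Bool} {x : X} : x ∈ trueVars β ↔ β x = true := by
  simp only [trueVars, Finset.mem_filter_univ]

theorem trueVars_surjective : Function.Surjective (trueVars : (X → Bool) → Finset X) := by
  classical exact fun T => ⟨fun x => decide (x ∈ T), by ext x; simp⟩

/-- The literals made true by an assignment, where `(y, true)` encodes the literal `y` and
`(y, false)` encodes `¬y`. -/
def trueLiterals (α : Y → Bool) : Finset (Y × Bool) :=
  Finset.univ.filter fun l => α l.1 = l.2

@[simp]
theorem mem_trueLiterals {α : Y → Bool} {l : Y × Bool} : l ∈ trueLiterals α ↔ α l.1 = l.2 := by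
  simp only [trueLiterals, Finset.mem_filter_univ]

theorem coe_trueLiterals (α : Y → Bool) :
    (trueLiterals α : Set (Y × Bool)) = Set.univ.graphOn α := by
  ext l
  simp

theorem injOn_fst_trueLiterals (α : Y → Bool) :
    Set.InjOn Prod.fst (trueLiterals α : Set (Y × Bool)) := by
  rw [coe_trueLiterals]
  exact Set.fst_injOn_graph

theorem exists_subset_trueLiterals {S : Finset (Y × Bool)}
    (hS : Set.InjOn Prod.fst (S : Set (Y × Bool))) : ∃ α : Y → Bool, S ⊆ trueLiterals α := by
  obtain ⟨α, hα⟩ := Set.exists_eq_graphOn_image_fst.2 hS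
  refine ⟨α, fun l hl => mem_trueLiterals.2 ?_⟩
  rw [← Finset.mem_coe, hα] at hl
  exact (Set.mem_graphOn.1 hl).2

theorem eq_trueLiterals_of_subset {α : Y → Bool} {S : Finset (Y × Bool)}
    (hS : Set.InjOn Prod.fst (S : Set (Y × Bool))) (hα : trueLiterals α ⊆ S) :
    S = trueLiterals α := by
  refine (Finset.Subset.antisymm hα fun l hl => ?_).symm
  have hmem : (l.1, α l.1) ∈ trueLiterals α := mem_trueLiterals.2 rfl
  rwa [← hS (hα hmem) hl rfl]

end Literals

section Reduction

variable {X Y : Type} {cXX : X → X → Prop} {cXY : X → Y → Bool → Prop}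

/-- The assignment `α ∪ β` satisfies the formula `ψ` whose clauses are given by `cXX` and `cXY`. -/
def Satisfies (cXX : X → X → Prop) (cXY : X → Y → Bool → Prop) (α : Y → Bool) (β : X → Bool) :
    Prop :=
  (∀ a b, cXX a b → β a = false ∨ β b = false) ∧
    ∀ a y s, cXY a y s → β a = false ∨ α y = s

/-- The cliques of the graph with adjacency `adj6`, as pairwise adjacent sets of vertices, so that
`adj6` need not be bundled into a `SimpleGraph`. -/
def IsCliqueAdj6 (cXX : X → X → Prop) (cXY : X → Y → Bool → Prop) (C : Finset ((Y × Bool) ⊕ X)) :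
    Prop :=
  (C : Set ((Y × Bool) ⊕ X)).Pairwise (adj6 cXX cXY)

theorem isCliqueAdj6_iff {C : Finset ((Y × Bool) ⊕ X)} :
    IsCliqueAdj6 cXX cXY C ↔
      Set.InjOn Prod.fst (C.toLeft : Set (Y × Bool)) ∧
      (C.toRight : Set X).Pairwise (fun a b => ¬ cXX a b) ∧
      ∀ l ∈ C.toLeft, ∀ a ∈ C.toRight, ¬ cXY a l.1 (!l.2) := by
  simp only [Finset.mem_toLeft, Finset.mem_toRight]
  constructor
  · intro hC
    refine ⟨fun l hl l' hl' hfst => ?_, fun a ha b hb hab => ?_, fun l hl a ha => ?_⟩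
    · rw [Finset.mem_coe, Finset.mem_toLeft] at hl hl'
      by_contra hne
      exact hC hl hl' (Sum.inl_injective.ne hne) hfst
    · rw [Finset.mem_coe, Finset.mem_toRight] at ha hb
      exact (hC ha hb (Sum.inr_injective.ne hab)).2
    · exact hC hl ha Sum.inl_ne_inr
  · rintro ⟨hinj, hXX, hXY⟩ (l | a) hp (l' | b) hq hne
    · exact fun hfst => hne (congrArg Sum.inl
        (hinj (Finset.mem_toLeft.2 hp) (Finset.mem_toLeft.2 hq) hfst))
    · exact hXY l hp b hq
    · exact hXY l' hq a hp
    · have hab : a ≠ b := fun hab => hne (congrArg Sum.inr hab)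
      exact ⟨hab, hXX (Finset.mem_toRight.2 hp) (Finset.mem_toRight.2 hq) hab⟩

theorem weight_eq_card_trueVars [Fintype X] (β : X → Bool) : weight β = (trueVars β).card :=
  rfl

variable [Fintype Y]

theorem isCliqueAdj6_trueLiterals (α : Y → Bool) :
    IsCliqueAdj6 cXX cXY ((trueLiterals α).disjSum ∅) := by
  rw [isCliqueAdj6_iff, Finset.toLeft_disjSum, Finset.toRight_disjSum]
  exact ⟨injOn_fst_trueLiterals α, by simp, by simp⟩

theorem satisfies_iff_isCliqueAdj6 [Fintype X] (hdistinct : ∀ a b, cXX a b → a ≠ b)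
    {α : Y → Bool} {β : X → Bool} :
    Satisfies cXX cXY α β ↔ IsCliqueAdj6 cXX cXY ((trueLiterals α).disjSum (trueVars β)) := by
  have hXX : (∀ a b, cXX a b → β a = false ∨ β b = false) ↔
      (trueVars β : Set X).Pairwise (fun a b => ¬ cXX a b) := by
    refine ⟨fun h a ha b hb _ hc => ?_, fun h a b hc => ?_⟩
    · rw [Finset.mem_coe, mem_trueVars] at ha hb
      simpa [ha, hb] using h a b hc
    · by_contra! hviolated
      exact h (by simpa using hviolated.1) (by simpa using hviolated.2) (hdistinct a b hc) hc
  have hXY : (∀ a y s, cXY a y s → β a = false ∨ α y = s) ↔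
      ∀ l ∈ trueLiterals α, ∀ a ∈ trueVars β, ¬ cXY a l.1 (!l.2) := by
    simp only [mem_trueLiterals, mem_trueVars]
    refine ⟨fun h l hl a ha hc => ?_, fun h a y s hc => ?_⟩
    · rcases h a l.1 _ hc with hβ | hα
      · exact Bool.false_ne_true (hβ.symm.trans ha)
      · exact Bool.eq_not.1 hα hl
    · by_contra! hviolated
      exact h (y, !s) (Bool.eq_not.2 hviolated.2) a (Bool.eq_true_of_not_eq_false hviolated.1)
        ((Bool.not_not s).symm ▸ hc)
  rw [isCliqueAdj6_iff, Finset.toLeft_disjSum, Finset.toRight_disjSum, Satisfies, hXX, hXY]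
  exact (and_iff_right (injOn_fst_trueLiterals α)).symm

theorem exists_weight_eq_and_satisfies_iff [Fintype X]
    (hdistinct : ∀ a b, cXX a b → a ≠ b) {k : ℕ} {α : Y → Bool} :
    (∃ β, weight β = k ∧ Satisfies cXX cXY α β) ↔
      ∃ T : Finset X, T.card = k ∧ IsCliqueAdj6 cXX cXY ((trueLiterals α).disjSum T) := by
  simp only [trueVars_surjective.exists, satisfies_iff_isCliqueAdj6 hdistinct,
    weight_eq_card_trueVars]

variable [DecidableEq X] [DecidableEq Y]

theorem exists_extension_of_isCliqueAdj6_disjSum {α : Y → Bool} {C : Finset ((Y × Bool) ⊕ X)}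
    {T : Finset X} (hC : C.toRight = ∅) (hCα : C.toLeft ⊆ trueLiterals α)
    (hT : IsCliqueAdj6 cXX cXY ((trueLiterals α).disjSum T)) :
    ∃ D : Finset ((Y × Bool) ⊕ X), D.card = T.card ∧ Disjoint C D ∧
      IsCliqueAdj6 cXX cXY (C ∪ D) := by
  refine ⟨T.map .inr, Finset.card_map _, ?_, Set.Pairwise.mono (Finset.coe_subset.2 ?_) hT⟩
  · rw [← Finset.toLeft_disjSum_toRight (u := C), hC, Finset.disjSum_empty]
    exact Finset.disjoint_map_inl_map_inr _ _
  · refine Finset.union_subset (Finset.subset_disjSum.2 ⟨hCα, by simp [hC]⟩) ?_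
    rw [← Finset.empty_disjSum]
    exact Finset.disjSum_mono (Finset.empty_subset _) subset_rfl

theorem exists_isCliqueAdj6_disjSum_of_extension {α : Y → Bool} {D : Finset ((Y × Bool) ⊕ X)}
    (hdisj : Disjoint ((trueLiterals α).disjSum ∅) D)
    (hD : IsCliqueAdj6 cXX cXY ((trueLiterals α).disjSum ∅ ∪ D)) :
    ∃ T : Finset X, T.card = D.card ∧ IsCliqueAdj6 cXX cXY ((trueLiterals α).disjSum T) := by
  have hmax : trueLiterals α ∪ D.toLeft = trueLiterals α := by
    refine eq_trueLiterals_of_subset ?_ Finset.subset_union_left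
    simpa only [Finset.toLeft_union, Finset.toLeft_disjSum] using (isCliqueAdj6_iff.1 hD).1
  have hleft : D.toLeft = ∅ := by
    refine Finset.eq_empty_of_forall_notMem fun l hl => ?_
    have hlα : l ∈ trueLiterals α := Finset.union_eq_left.1 hmax hl
    exact Finset.disjoint_left.1 hdisj (Finset.inl_mem_disjSum.2 hlα) (Finset.mem_toLeft.1 hl)
  refine ⟨D.toRight, ?_, ?_⟩
  · rw [← Finset.card_toLeft_add_card_toRight (u := D), hleft, Finset.card_empty, zero_add]
  · have hunion : (trueLiterals α).disjSum ∅ ∪ D = (trueLiterals α).disjSum D.toRight := by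
      rw [Finset.eq_disjSum_iff, Finset.toLeft_union, Finset.toRight_union, Finset.toLeft_disjSum,
        Finset.toRight_disjSum, hleft, Finset.union_empty, Finset.empty_union]
      exact ⟨rfl, rfl⟩
    rwa [← hunion]

end Reduction

/-- Correctness of the reduction from ∀*∃ᵏ-WSat(2CNF) (for formulas that are antimonotone
in the existential variables `X`) to Small-Clique-Extension: for every assignment `α` to
`Y` there is a weight-`k` assignment `β` to `X` such that `α ∪ β` satisfies `ψ` iff every
clique `C ⊆ V' = {v_y, v_{¬y} : y ∈ Y}` of the constructed graph can be extended by `k`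
further vertices to a clique of size `|C| + k`. -/
theorem statement6 {X Y : Type} [Fintype X] [Fintype Y] [DecidableEq X] [DecidableEq Y]
    (k : ℕ) (cXX : X → X → Prop) (cXY : X → Y → Bool → Prop)
    (hsymm : ∀ a b, cXX a b → cXX b a)
    (hdistinct : ∀ a b, cXX a b → a ≠ b) :
    ((∀ α : Y → Bool, ∃ β : X → Bool, weight β = k ∧
        (∀ a b, cXX a b → (β a = false ∨ β b = false)) ∧
        (∀ a y s, cXY a y s → (β a = false ∨ α y = s))) ↔
      (∀ C : Finset ((Y × Bool) ⊕ X),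
        (∀ p ∈ C, p.isLeft = true) →
        (∀ p ∈ C, ∀ q ∈ C, p ≠ q → adj6 cXX cXY p q) →
        ∃ D : Finset ((Y × Bool) ⊕ X),
          D.card = k ∧ Disjoint C D ∧
          (∀ p ∈ C ∪ D, ∀ q ∈ C ∪ D, p ≠ q → adj6 cXX cXY p q))) := by
  have hsat := fun α : Y → Bool =>
    exists_weight_eq_and_satisfies_iff (cXY := cXY) (k := k) (α := α) hdistinct
  refine (forall_congr' hsat).trans ⟨fun h C hleft hC => ?_, fun h α => ?_⟩
  · obtain ⟨α, hα⟩ := exists_subset_trueLiterals (isCliqueAdj6_iff.1 hC).1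
    obtain ⟨T, rfl, hT⟩ := h α
    exact exists_extension_of_isCliqueAdj6_disjSum (toRight_eq_empty_iff.2 hleft) hα hT
  · obtain ⟨D, rfl, hdisj, hD⟩ := h ((trueLiterals α).disjSum ∅)
      (toRight_eq_empty_iff.1 Finset.toRight_disjSum) (isCliqueAdj6_trueLiterals α)
    exact exists_isCliqueAdj6_disjSum_of_extension hdisj hD
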